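/- arXiv:1901.03799 — 3 statements merged into one kernel-verified Lean document; each statement's English description precedes it below -/
import Mathlib

section
/- Let (F_i, v_i), i ∈ {1,…,m}, be c-fusion woven for H with universal bounds A and B, and let U be a bounded invertible linear operator on H. Then (U F_i(·), v_i), i ∈ {1,…,m}, is c-fusion woven for H: for every partition {σ_i}_{i=1}^m of X into pairwise disjoint measurable sets and every h ∈ H, A‖U⁻¹‖⁻²‖U‖⁻²‖h‖² ≤ Σ_{i=1}^m ∫_{σ_i} v_i(x)²‖π_{U F_i(x)}h‖² dμ(x) ≤ B‖U⁻¹‖²‖U‖²‖h‖². -/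
/-!
If a bounded operator `T` maps `W` into `V`, then `T†` maps `Vᗮ` into `Wᗮ`, so
`P_W T† = P_W T† P_V` and `‖P_W T† h‖ ≤ ‖T‖ ‖P_V h‖`. Applied to `U : W → U W` and, since
`(U⁻¹)† U† = 1`, to `U⁻¹ : U W → W` at the vector `U† h`, this bounds `‖P_{U W} h‖` and
`‖P_W (U† h)‖` by each other; integrating gives both inequalities.

The Bochner integrals are meaningful only once `x ↦ P_{U W(x)} h` is known to be measurable. Its
complement `(U W)ᗮ` is the kernel of `A = P_W U†`, which for `‖A‖ ≤ 1` is the fixed space of the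
contraction `1 - A† A`. By von Neumann's mean ergodic theorem the projection onto it is therefore
the pointwise limit of Birkhoff averages, which are measurable in `x`.
-/

open MeasureTheory

/-- The orthogonal projection of `h` onto the closed subspace `K` of a Hilbert space. -/
noncomputable def cProj {H : Type*} [NormedAddCommGroup H] [InnerProductSpace ℂ H]
    [CompleteSpace H] (K : Submodule ℂ H) (hK : IsClosed (K : Set H)) (h : H) : H :=
  haveI : CompleteSpace K := hK.completeSpace_coe
  (Submodule.orthogonalProjectionOnto K h : H)

/-- The image of a closed subspace under a topological linear isomorphism is closed. -/
theorem isClosed_map_equiv {H : Type*} [NormedAddCommGroup H] [InnerProductSpace ℂ H]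
    [CompleteSpace H] (U : H ≃L[ℂ] H) (K : Submodule ℂ H) (hK : IsClosed (K : Set H)) :
    IsClosed ((K.map (U : H →ₗ[ℂ] H) : Submodule ℂ H) : Set H) := by
  rw [Submodule.map_coe]
  exact U.toHomeomorph.isClosedMap _ hK

open Filter Topology
open scoped InnerProduct

section Projections

theorem mapsTo_symm_map {𝕜 E F : Type*} [Semiring 𝕜]
    [TopologicalSpace E] [AddCommMonoid E] [Module 𝕜 E]
    [TopologicalSpace F] [AddCommMonoid F] [Module 𝕜 F] (U : E ≃L[𝕜] F) (W : Submodule 𝕜 E) :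
    Set.MapsTo (U.symm : F →L[𝕜] E) (W.map (U : E →ₗ[𝕜] F)) W := by
  rintro _ ⟨w, hw, rfl⟩
  simpa using hw

instance completeSpace_map_continuousLinearEquiv {𝕜 E F : Type*} [NormedField 𝕜]
    [NormedAddCommGroup E] [NormedSpace 𝕜 E] [NormedAddCommGroup F] [NormedSpace 𝕜 F]
    (U : E ≃L[𝕜] F) (W : Submodule 𝕜 E) [CompleteSpace W] :
    CompleteSpace (W.map (U : E →ₗ[𝕜] F)) :=
  (completeSpace_congr (e := (U.submoduleMap W).toEquiv)
    (U.submoduleMap W).isUniformEmbedding).1 inferInstance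

variable {𝕜 E F : Type*} [RCLike 𝕜]
  [NormedAddCommGroup E] [InnerProductSpace 𝕜 E] [CompleteSpace E]
  [NormedAddCommGroup F] [InnerProductSpace 𝕜 F] [CompleteSpace F]

theorem starProjection_adjoint_starProjection {T : E →L[𝕜] F} {W : Submodule 𝕜 E}
    {V : Submodule 𝕜 F} [W.HasOrthogonalProjection] [V.HasOrthogonalProjection]
    (hT : Set.MapsTo T W V) (h : F) :
    W.starProjection ((T†) (V.starProjection h)) = W.starProjection ((T†) h) := by
  have hperp : (T†) (h - V.starProjection h) ∈ Wᗮ := fun w hw ↦ by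
    rw [ContinuousLinearMap.adjoint_inner_right]
    exact V.sub_starProjection_mem_orthogonal h _ (hT hw)
  rw [← W.starProjection_apply_eq_zero_iff, map_sub, map_sub, sub_eq_zero] at hperp
  exact hperp.symm

theorem norm_adjoint_apply_le (T : E →L[𝕜] F) (h : F) : ‖(T†) h‖ ≤ ‖T‖ * ‖h‖ := by
  simpa only [LinearIsometryEquiv.norm_map] using (T†).le_opNorm h

theorem norm_starProjection_adjoint_le {T : E →L[𝕜] F} {W : Submodule 𝕜 E}
    {V : Submodule 𝕜 F} [W.HasOrthogonalProjection] [V.HasOrthogonalProjection]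
    (hT : Set.MapsTo T W V) (h : F) :
    ‖W.starProjection ((T†) h)‖ ≤ ‖T‖ * ‖V.starProjection h‖ := by
  rw [← starProjection_adjoint_starProjection hT]
  exact (W.norm_starProjection_apply_le _).trans (norm_adjoint_apply_le T _)

theorem adjoint_symm_adjoint_apply (U : E ≃L[𝕜] F) (h : F) :
    ((U.symm : F →L[𝕜] E)†) (((U : E →L[𝕜] F)†) h) = h := by
  rw [← ContinuousLinearMap.comp_apply, ← ContinuousLinearMap.adjoint_comp,
    U.coe_comp_coe_symm, ContinuousLinearMap.adjoint_id, ContinuousLinearMap.id_apply]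

theorem ker_starProjection_comp_adjoint (T : E →L[𝕜] F) (W : Submodule 𝕜 E)
    [W.HasOrthogonalProjection] :
    (W.starProjection ∘L T†).ker = (W.map (T : E →ₗ[𝕜] F))ᗮ := by
  ext h
  simp only [LinearMap.mem_ker, ContinuousLinearMap.coe_coe, ContinuousLinearMap.comp_apply,
    Submodule.starProjection_apply_eq_zero_iff, Submodule.mem_orthogonal, Submodule.mem_map,
    forall_exists_index, and_imp, forall_apply_eq_imp_iff₂, ContinuousLinearMap.adjoint_inner_right]

theorem norm_one_sub_adjoint_comp_self_le_one {A : E →L[𝕜] F} (hA : ‖A‖ ≤ 1) :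
    ‖1 - A† ∘L A‖ ≤ 1 := by
  refine ContinuousLinearMap.opNorm_le_bound _ zero_le_one fun h ↦ ?_
  have hAh : ‖(A†) (A h)‖ ≤ ‖A h‖ :=
    (norm_adjoint_apply_le A _).trans (mul_le_of_le_one_left (norm_nonneg _) hA)
  rw [one_mul, ← sq_le_sq₀ (norm_nonneg _) (norm_nonneg _)]
  calc ‖(1 - A† ∘L A) h‖ ^ 2 = ‖h‖ ^ 2 - 2 * ‖A h‖ ^ 2 + ‖(A†) (A h)‖ ^ 2 := by
        simp only [sub_apply, one_apply_eq_self, ContinuousLinearMap.comp_apply]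
        rw [@norm_sub_sq 𝕜, ContinuousLinearMap.adjoint_inner_right, ← norm_sq_eq_re_inner]
    _ ≤ ‖h‖ ^ 2 - 2 * ‖A h‖ ^ 2 + ‖A h‖ ^ 2 := by gcongr
    _ ≤ ‖h‖ ^ 2 := by linarith [sq_nonneg ‖A h‖]

end Projections

section Measurability

variable {X : Type*} [MeasurableSpace X] {μ : Measure X}

theorem aestronglyMeasurable_apply_of_continuous {Y Z : Type*} [TopologicalSpace Y]
    [TopologicalSpace Z] [TopologicalSpace.PseudoMetrizableSpace Z] {P : X → Y → Z} {g : X → Y}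
    (hcont : ∀ x, Continuous (P x)) (hP : ∀ y, AEStronglyMeasurable (P · y) μ)
    (hg : AEStronglyMeasurable g μ) : AEStronglyMeasurable (fun x ↦ P x (g x)) μ := by
  have hsimple (s : SimpleFunc X Y) : AEStronglyMeasurable (fun x ↦ P x (s x)) μ := by
    rcases isEmpty_or_nonempty X with _ | ⟨⟨x₀⟩⟩
    · exact .of_subsingleton_dom
    have : Nonempty Y := ⟨g x₀⟩
    induction s using SimpleFunc.induction' with
    | const y => exact hP y
    | pcw hs hs₁ hs₂ =>
      classical
      convert! hs₁.restrict.piecewise hs hs₂.restrict with x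
      simp only [SimpleFunc.coe_piecewise]
      exact Set.apply_piecewise _ _ _ (fun x ↦ P x)
  obtain ⟨g', hg', hgg'⟩ := hg
  have hlim : AEStronglyMeasurable (fun x ↦ P x (g' x)) μ :=
    aestronglyMeasurable_of_tendsto_ae atTop (fun n ↦ hsimple (hg'.approx n)) <|
      .of_forall fun x ↦ ((hcont x).tendsto _).comp (hg'.tendsto_approx x)
  exact hlim.congr (hgg'.mono fun x hx ↦ congrArg (P x) hx.symm)

variable {𝕜 E F : Type*} [RCLike 𝕜]
  [NormedAddCommGroup E] [InnerProductSpace 𝕜 E] [CompleteSpace E]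
  [NormedAddCommGroup F] [InnerProductSpace 𝕜 F] [CompleteSpace F]

theorem aestronglyMeasurable_starProjection_eqLocus {S : X → E →L[𝕜] E}
    (hS : ∀ x, ‖S x‖ ≤ 1) (hSmeas : ∀ h, AEStronglyMeasurable (S · h) μ) (h : E) :
    AEStronglyMeasurable (fun x ↦ ((S x).eqLocus (1 : E →L[𝕜] E)).starProjection h) μ := by
  have hiter (n : ℕ) : AEStronglyMeasurable (fun x ↦ (S x)^[n] h) μ := by
    induction n with
    | zero => exact aestronglyMeasurable_const
    | succ n ih =>
      simp only [Function.iterate_succ_apply']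
      exact aestronglyMeasurable_apply_of_continuous (fun x ↦ (S x).continuous) hSmeas ih
  refine aestronglyMeasurable_of_tendsto_ae atTop (fun n ↦ ?_) <|
    .of_forall fun x ↦ (S x).tendsto_birkhoffAverage_orthogonalProjection (hS x) h
  exact (Finset.aestronglyMeasurable_fun_sum _ fun k _ ↦ hiter k).const_smul _

theorem aestronglyMeasurable_starProjection_ker {A : X → E →L[𝕜] F}
    (hA : ∀ x, ‖A x‖ ≤ 1) (hAmeas : ∀ h, AEStronglyMeasurable (fun x ↦ ((A x)†) (A x h)) μ)
    (h : E) : AEStronglyMeasurable (fun x ↦ (A x).ker.starProjection h) μ := by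
  have hker (x : X) : (A x).ker = (1 - (A x)† ∘L A x).eqLocus (1 : E →L[𝕜] E) := by
    rw [← (A x).ker_adjoint_comp_self]
    ext; simp
  simp only [hker]
  exact aestronglyMeasurable_starProjection_eqLocus
    (fun x ↦ norm_one_sub_adjoint_comp_self_le_one (hA x))
    (fun h ↦ aestronglyMeasurable_const.sub (hAmeas h)) h

theorem aestronglyMeasurable_starProjection_of_map_eq_of_norm_le_one {T : E →L[𝕜] F} (hT : ‖T‖ ≤ 1)
    {W : X → Submodule 𝕜 E} {V : X → Submodule 𝕜 F}
    [∀ x, (W x).HasOrthogonalProjection] [∀ x, (V x).HasOrthogonalProjection]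
    (hV : ∀ x, (W x).map (T : E →ₗ[𝕜] F) = V x)
    (hW : ∀ g, AEStronglyMeasurable (fun x ↦ (W x).starProjection g) μ) (h : F) :
    AEStronglyMeasurable (fun x ↦ (V x).starProjection h) μ := by
  let A (x : X) : F →L[𝕜] E := (W x).starProjection ∘L T†
  have hA (x : X) : ‖A x‖ ≤ 1 := by
    refine (ContinuousLinearMap.opNorm_comp_le _ _).trans (mul_le_one₀ ?_ (norm_nonneg _) ?_)
    · exact (W x).starProjection_norm_le
    · rwa [LinearIsometryEquiv.norm_map]
  have hAA (k : F) (x : X) : ((A x)†) (A x k) = T ((W x).starProjection ((T†) k)) := by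
    simp only [A, ContinuousLinearMap.adjoint_comp, ContinuousLinearMap.adjoint_adjoint,
      ContinuousLinearMap.comp_apply, isSelfAdjoint_starProjection (W x) |>.adjoint_eq,
      Submodule.starProjection_eq_self_iff.2 ((W x).starProjection_apply_mem _)]
  have hAmeas (k : F) : AEStronglyMeasurable (fun x ↦ ((A x)†) (A x k)) μ := by
    simp only [hAA]
    exact T.continuous.comp_aestronglyMeasurable (hW _)
  have hperp := aestronglyMeasurable_starProjection_ker hA hAmeas h
  simp only [A, ker_starProjection_comp_adjoint, hV,
    Submodule.starProjection_orthogonal_val] at hperp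
  exact (aestronglyMeasurable_const (b := h)).sub hperp |>.congr
    (.of_forall fun x ↦ sub_sub_cancel _ _)

theorem aestronglyMeasurable_starProjection_of_map_eq (T : E →L[𝕜] F) {W : X → Submodule 𝕜 E}
    {V : X → Submodule 𝕜 F} [∀ x, (W x).HasOrthogonalProjection]
    [∀ x, (V x).HasOrthogonalProjection] (hV : ∀ x, (W x).map (T : E →ₗ[𝕜] F) = V x)
    (hW : ∀ g, AEStronglyMeasurable (fun x ↦ (W x).starProjection g) μ) (h : F) :
    AEStronglyMeasurable (fun x ↦ (V x).starProjection h) μ := by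
  set c : ℝ := (‖T‖ + 1)⁻¹
  have hc : (c : 𝕜) ≠ 0 := RCLike.ofReal_ne_zero.2 (by positivity)
  have hcT : ‖(c : 𝕜) • T‖ ≤ 1 := by
    rw [norm_smul, RCLike.norm_ofReal, abs_of_nonneg (by positivity),
      inv_mul_le_one₀ (by positivity)]
    exact (lt_add_one _).le
  exact aestronglyMeasurable_starProjection_of_map_eq_of_norm_le_one hcT
    (fun x ↦ (Submodule.map_smul (T : E →ₗ[𝕜] F) (W x) (c : 𝕜) hc).trans (hV x)) hW h

end Measurability

section WeightedEnergy

variable {X : Type*} [MeasurableSpace X] {μ : Measure X}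

theorem sq_mul_norm_sq_le_of_norm_le {E F : Type*} [SeminormedAddCommGroup E]
    [SeminormedAddCommGroup F] {y : E} {z : F} {C : ℝ} (w : ℝ) (hyz : ‖y‖ ≤ C * ‖z‖) :
    w ^ 2 * ‖y‖ ^ 2 ≤ C ^ 2 * (w ^ 2 * ‖z‖ ^ 2) :=
  calc w ^ 2 * ‖y‖ ^ 2 ≤ w ^ 2 * (C * ‖z‖) ^ 2 := by gcongr
    _ = C ^ 2 * (w ^ 2 * ‖z‖ ^ 2) := by ring

theorem integrable_sq_mul_norm_sq_of_norm_le {E F : Type*} [SeminormedAddCommGroup E]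
    [SeminormedAddCommGroup F] {v : X → ℝ} {f : X → E} {g : X → F} {C : ℝ}
    (hv : AEStronglyMeasurable v μ) (hf : AEStronglyMeasurable f μ)
    (hg : Integrable (fun x ↦ v x ^ 2 * ‖g x‖ ^ 2) μ) (hfg : ∀ x, ‖f x‖ ≤ C * ‖g x‖) :
    Integrable (fun x ↦ v x ^ 2 * ‖f x‖ ^ 2) μ := by
  refine (hg.const_mul (C ^ 2)).mono' ((hv.pow 2).mul (hf.norm.pow 2)) (.of_forall fun x ↦ ?_)
  rw [Real.norm_of_nonneg (by positivity)]
  exact sq_mul_norm_sq_le_of_norm_le (v x) (hfg x)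

theorem integral_sq_mul_norm_sq_le_of_norm_le {E F : Type*} [SeminormedAddCommGroup E]
    [SeminormedAddCommGroup F] {v : X → ℝ} {f : X → E} {g : X → F} {C : ℝ}
    (hg : Integrable (fun x ↦ v x ^ 2 * ‖g x‖ ^ 2) μ) (hfg : ∀ x, ‖f x‖ ≤ C * ‖g x‖) :
    ∫ x, v x ^ 2 * ‖f x‖ ^ 2 ∂μ ≤ C ^ 2 * ∫ x, v x ^ 2 * ‖g x‖ ^ 2 ∂μ := by
  rw [← integral_const_mul]
  exact integral_mono_of_nonneg (.of_forall fun x ↦ by positivity) (hg.const_mul _)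
    (.of_forall fun x ↦ sq_mul_norm_sq_le_of_norm_le (v x) (hfg x))

variable {𝕜 E F ι : Type*} [RCLike 𝕜] [Fintype ι]
  [NormedAddCommGroup E] [InnerProductSpace 𝕜 E]
  [NormedAddCommGroup F] [InnerProductSpace 𝕜 F]

/-- The middle term `∑ i, ∫_{σ i} v_i(x)² ‖π_{W_i(x)} h‖² dμ(x)` of the inequality defining woven
c-fusion frames, for an arbitrary family of sets `σ`. -/
noncomputable def wovenEnergy (μ : Measure X) (σ : ι → Set X) (v : ι → X → ℝ)
    (W : ι → X → Submodule 𝕜 E) [∀ i x, (W i x).HasOrthogonalProjection] (h : E) : ℝ :=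
  ∑ i, ∫ x in σ i, v i x ^ 2 * ‖(W i x).starProjection h‖ ^ 2 ∂μ

theorem wovenEnergy_nonneg (μ : Measure X) (σ : ι → Set X) (v : ι → X → ℝ)
    (W : ι → X → Submodule 𝕜 E) [∀ i x, (W i x).HasOrthogonalProjection] (h : E) :
    0 ≤ wovenEnergy μ σ v W h :=
  Finset.sum_nonneg fun _ _ ↦ integral_nonneg fun _ ↦ by positivity

theorem wovenEnergy_adjoint_le [CompleteSpace E] [CompleteSpace F] {σ : ι → Set X}
    {v : ι → X → ℝ} {T : E →L[𝕜] F} {W : ι → X → Submodule 𝕜 E} {V : ι → X → Submodule 𝕜 F}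
    [∀ i x, (W i x).HasOrthogonalProjection] [∀ i x, (V i x).HasOrthogonalProjection]
    (hT : ∀ i x, Set.MapsTo T (W i x) (V i x)) {h : F}
    (hV : ∀ i, IntegrableOn (fun x ↦ v i x ^ 2 * ‖(V i x).starProjection h‖ ^ 2) (σ i) μ) :
    wovenEnergy μ σ v W ((T†) h) ≤ ‖T‖ ^ 2 * wovenEnergy μ σ v V h := by
  rw [wovenEnergy, wovenEnergy, Finset.mul_sum]
  exact Finset.sum_le_sum fun i _ ↦ integral_sq_mul_norm_sq_le_of_norm_le (hV i)
    fun x ↦ norm_starProjection_adjoint_le (hT i x) h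

end WeightedEnergy

section Woven

variable {X : Type*} [MeasurableSpace X] {μ : Measure X}
  {𝕜 E F ι : Type*} [RCLike 𝕜]
  [NormedAddCommGroup E] [InnerProductSpace 𝕜 E] [CompleteSpace E]
  [NormedAddCommGroup F] [InnerProductSpace 𝕜 F] [CompleteSpace F]

theorem norm_starProjection_map_le (U : E ≃L[𝕜] F) (W : Submodule 𝕜 E) [CompleteSpace W] (h : F) :
    ‖(W.map (U : E →ₗ[𝕜] F)).starProjection h‖ ≤
      ‖(U.symm : F →L[𝕜] E)‖ * ‖W.starProjection (((U : E →L[𝕜] F)†) h)‖ := by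
  simpa only [adjoint_symm_adjoint_apply] using
    norm_starProjection_adjoint_le (mapsTo_symm_map U W) (((U : E →L[𝕜] F)†) h)

theorem integrable_sq_mul_norm_sq_starProjection_map {v : X → ℝ} {W : X → Submodule 𝕜 E}
    [∀ x, CompleteSpace (W x)] (hv : AEStronglyMeasurable v μ)
    (hW : ∀ g, AEStronglyMeasurable (fun x ↦ (W x).starProjection g) μ)
    (hInt : ∀ g, Integrable (fun x ↦ v x ^ 2 * ‖(W x).starProjection g‖ ^ 2) μ)
    (U : E ≃L[𝕜] F) (h : F) :
    Integrable
      (fun x ↦ v x ^ 2 * ‖((W x).map (U : E →ₗ[𝕜] F)).starProjection h‖ ^ 2) μ := by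
  have hmeas := aestronglyMeasurable_starProjection_of_map_eq (U : E →L[𝕜] F)
    (V := fun x ↦ (W x).map (U : E →ₗ[𝕜] F)) (fun _ ↦ rfl) hW h
  exact integrable_sq_mul_norm_sq_of_norm_le hv hmeas (hInt _)
    fun x ↦ norm_starProjection_map_le U (W x) h

theorem cFusionWoven_invertible_operator_general [Fintype ι] {σ : ι → Set X} {v : ι → X → ℝ}
    {W : ι → X → Submodule 𝕜 E} [∀ i x, CompleteSpace (W i x)]
    (hv : ∀ i, AEStronglyMeasurable (v i) μ)
    (hW : ∀ i g, AEStronglyMeasurable (fun x ↦ (W i x).starProjection g) μ)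
    (hInt : ∀ i g, Integrable (fun x ↦ v i x ^ 2 * ‖(W i x).starProjection g‖ ^ 2) μ)
    {A B : ℝ} (hA : 0 ≤ A) (hB : 0 ≤ B)
    (hwoven : ∀ g : E, A * ‖g‖ ^ 2 ≤ wovenEnergy μ σ v W g ∧
      wovenEnergy μ σ v W g ≤ B * ‖g‖ ^ 2)
    (U : E ≃L[𝕜] F) (h : F) :
    A * (‖(U.symm : F →L[𝕜] E)‖ ^ 2)⁻¹ * (‖(U : E →L[𝕜] F)‖ ^ 2)⁻¹ * ‖h‖ ^ 2 ≤
        wovenEnergy μ σ v (fun i x ↦ (W i x).map (U : E →ₗ[𝕜] F)) h ∧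
      wovenEnergy μ σ v (fun i x ↦ (W i x).map (U : E →ₗ[𝕜] F)) h ≤
        B * ‖(U.symm : F →L[𝕜] E)‖ ^ 2 * ‖(U : E →L[𝕜] F)‖ ^ 2 * ‖h‖ ^ 2 := by
  set M := ‖(U : E →L[𝕜] F)‖
  set N := ‖(U.symm : F →L[𝕜] E)‖
  set S := wovenEnergy μ σ v W
  set T := wovenEnergy μ σ v (fun i x ↦ (W i x).map (U : E →ₗ[𝕜] F))
  set g := ((U : E →L[𝕜] F)†) h
  have hg : ((U.symm : F →L[𝕜] E)†) g = h := adjoint_symm_adjoint_apply U h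
  have hgh : ‖g‖ ≤ M * ‖h‖ := norm_adjoint_apply_le _ h
  have hhg : ‖h‖ ≤ N * ‖g‖ := by
    simpa only [hg] using norm_adjoint_apply_le (U.symm : F →L[𝕜] E) g
  have hST : S g ≤ M ^ 2 * T h :=
    wovenEnergy_adjoint_le (T := (U : E →L[𝕜] F))
      (V := fun i x ↦ (W i x).map (U : E →ₗ[𝕜] F)) (fun _ _ w hw ↦ ⟨w, hw, rfl⟩) fun i ↦
      (integrable_sq_mul_norm_sq_starProjection_map (hv i) (hW i) (hInt i) U h).integrableOn
  have hTS : T h ≤ N ^ 2 * S g := by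
    simpa only [hg] using wovenEnergy_adjoint_le (h := g)
      (fun i x ↦ mapsTo_symm_map U (W i x)) fun i ↦ (hInt i g).integrableOn
  have hlower : (N ^ 2)⁻¹ * ‖h‖ ^ 2 ≤ ‖g‖ ^ 2 :=
    inv_mul_le_of_le_mul₀ (sq_nonneg N) (sq_nonneg _) (by rw [← mul_pow]; gcongr)
  constructor
  · calc A * (N ^ 2)⁻¹ * (M ^ 2)⁻¹ * ‖h‖ ^ 2
        = (M ^ 2)⁻¹ * (A * ((N ^ 2)⁻¹ * ‖h‖ ^ 2)) := by ring
      _ ≤ (M ^ 2)⁻¹ * (A * ‖g‖ ^ 2) := by gcongr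
      _ ≤ T h := inv_mul_le_of_le_mul₀ (sq_nonneg M) (wovenEnergy_nonneg ..)
          ((hwoven g).1.trans hST)
  · calc T h ≤ N ^ 2 * S g := hTS
      _ ≤ N ^ 2 * (B * ‖g‖ ^ 2) := by gcongr; exact (hwoven g).2
      _ ≤ N ^ 2 * (B * (M * ‖h‖) ^ 2) := by gcongr
      _ = B * N ^ 2 * M ^ 2 * ‖h‖ ^ 2 := by ring

end Woven

/-- If `(F i, v i)` is c-fusion woven for `H` with universal bounds `A, B`
and `U` is an invertible bounded operator on `H`, then `(U (F i ·), v i)` is c-fusion woven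
for `H` with universal bounds `A‖U⁻¹‖⁻²‖U‖⁻²` and `B‖U⁻¹‖²‖U‖²`. -/
theorem cFusionWoven_invertible_operator
    {X : Type*} [MeasurableSpace X] (μ : Measure X)
    {H : Type*} [NormedAddCommGroup H] [InnerProductSpace ℂ H] [CompleteSpace H]
    (m : ℕ) (F : Fin m → X → Submodule ℂ H) (hF : ∀ i x, IsClosed ((F i x : Set H)))
    (v : Fin m → X → ℝ) (hv_pos : ∀ i x, 0 < v i x) (hv_meas : ∀ i, Measurable (v i))
    (hFmeas : ∀ (i : Fin m) (h : H),
      AEStronglyMeasurable (fun x => cProj (F i x) (hF i x) h) μ)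
    (hInt : ∀ (i : Fin m) (h : H),
      Integrable (fun x => (v i x) ^ 2 * ‖cProj (F i x) (hF i x) h‖ ^ 2) μ)
    (A B : ℝ) (hA : 0 < A) (hAB : A ≤ B)
    (hwoven : ∀ (σ : Fin m → Set X), (∀ i, MeasurableSet (σ i)) →
      Pairwise (Function.onFun Disjoint σ) → (⋃ i, σ i) = Set.univ →
      ∀ h : H,
        A * ‖h‖ ^ 2 ≤ ∑ i, ∫ x in σ i, (v i x) ^ 2 * ‖cProj (F i x) (hF i x) h‖ ^ 2 ∂μ ∧
        ∑ i, ∫ x in σ i, (v i x) ^ 2 * ‖cProj (F i x) (hF i x) h‖ ^ 2 ∂μ ≤ B * ‖h‖ ^ 2)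
    (U : H ≃L[ℂ] H) :
    ∀ (σ : Fin m → Set X), (∀ i, MeasurableSet (σ i)) →
      Pairwise (Function.onFun Disjoint σ) → (⋃ i, σ i) = Set.univ →
      ∀ h : H,
        A * (‖(U.symm : H →L[ℂ] H)‖ ^ 2)⁻¹ * (‖(U : H →L[ℂ] H)‖ ^ 2)⁻¹ * ‖h‖ ^ 2 ≤
          ∑ i, ∫ x in σ i, (v i x) ^ 2 *
            ‖cProj ((F i x).map (U : H →ₗ[ℂ] H)) (isClosed_map_equiv U (F i x) (hF i x)) h‖ ^ 2 ∂μ ∧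
        ∑ i, ∫ x in σ i, (v i x) ^ 2 *
            ‖cProj ((F i x).map (U : H →ₗ[ℂ] H)) (isClosed_map_equiv U (F i x) (hF i x)) h‖ ^ 2 ∂μ ≤
          B * ‖(U.symm : H →L[ℂ] H)‖ ^ 2 * ‖(U : H →L[ℂ] H)‖ ^ 2 * ‖h‖ ^ 2 := by
  have (i : Fin m) (x : X) : CompleteSpace (F i x) := (hF i x).completeSpace_coe
  exact fun σ hσ hdisj huniv ↦ cFusionWoven_invertible_operator_general
    (fun i ↦ (hv_meas i).aestronglyMeasurable) hFmeas hInt hA.le (hA.le.trans hAB)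
    (hwoven σ hσ hdisj huniv) U
end

section
/- For each i ∈ {1,…,m}, let (F_i, v_i) be a c-fusion frame for H with bounds A_i and B_i. Suppose there exists a measurable subset Y ⊆ X such that the restricted family (F_i(x), v_i(x))_{x∈Y, i∈{1,…,m}} is c-fusion woven for H with universal bounds A and B, i.e. for every partition {σ_i}_{i=1}^m of Y into pairwise disjoint measurable sets, A‖h‖² ≤ Σ_i ∫_{σ_i} v_i(x)²‖π_{F_i(x)}h‖² dμ(x) ≤ B‖h‖² for all h ∈ H. Then the full family (F_i, v_i), i ∈ {1,…,m}, is c-fusion woven for H with universal bounds A and Σ_{i=1}^m B_i. -/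
open MeasureTheory

section Partition

variable {X ι : Type*} [MeasurableSpace X] {μ : Measure X} {σ : ι → Set X} {Y Z : Set X}

/-- A measurable partition of `Y` indexed by `ι`, as used to form the weavings of a family of
c-fusion frames. The pieces may be empty. -/
structure IsMeasurablePartition (σ : ι → Set X) (Y : Set X) : Prop where
  measurableSet : ∀ i, MeasurableSet (σ i)
  pairwise_disjoint : Pairwise (Function.onFun Disjoint σ)
  iUnion_eq : ⋃ i, σ i = Y

theorem IsMeasurablePartition.inter_of_subset (hσ : IsMeasurablePartition σ Z)
    (hY : MeasurableSet Y) (hYZ : Y ⊆ Z) : IsMeasurablePartition (fun i => σ i ∩ Y) Y where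
  measurableSet i := (hσ.measurableSet i).inter hY
  pairwise_disjoint _ _ hij :=
    (hσ.pairwise_disjoint hij).mono Set.inter_subset_left Set.inter_subset_left
  iUnion_eq := by rw [← Set.iUnion_inter, hσ.iUnion_eq, Set.inter_eq_right.mpr hYZ]

variable [Fintype ι] {f : ι → X → ℝ}

theorem sum_setIntegral_le_sum_integral (hf : ∀ i, Integrable (f i) μ)
    (hf_nonneg : ∀ i, 0 ≤ᵐ[μ] f i) :
    ∑ i, ∫ x in σ i, f i x ∂μ ≤ ∑ i, ∫ x, f i x ∂μ :=
  Finset.sum_le_sum fun i _ => setIntegral_le_integral (hf i) (hf_nonneg i)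

theorem sum_setIntegral_inter_le_sum_setIntegral (hf : ∀ i, IntegrableOn (f i) (σ i) μ)
    (hf_nonneg : ∀ i, 0 ≤ᵐ[μ.restrict (σ i)] f i) :
    ∑ i, ∫ x in σ i ∩ Y, f i x ∂μ ≤ ∑ i, ∫ x in σ i, f i x ∂μ :=
  Finset.sum_le_sum fun i _ =>
    setIntegral_mono_set (hf i) (hf_nonneg i) Set.inter_subset_left.eventuallyLE

theorem IsMeasurablePartition.le_sum_setIntegral_of_subset {a : ℝ}
    (hσ : IsMeasurablePartition σ Z) (hY : MeasurableSet Y) (hYZ : Y ⊆ Z)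
    (hf : ∀ i, IntegrableOn (f i) (σ i) μ) (hf_nonneg : ∀ i, 0 ≤ᵐ[μ.restrict (σ i)] f i)
    (ha : ∀ τ : ι → Set X, IsMeasurablePartition τ Y → a ≤ ∑ i, ∫ x in τ i, f i x ∂μ) :
    a ≤ ∑ i, ∫ x in σ i, f i x ∂μ :=
  (ha _ (hσ.inter_of_subset hY hYZ)).trans
    (sum_setIntegral_inter_le_sum_setIntegral hf hf_nonneg)

end Partition

theorem cFusionWoven_of_woven_on_subset_general
    {X ι 𝕜 H : Type*} [MeasurableSpace X] {μ : Measure X} [Fintype ι] [RCLike 𝕜]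
    [NormedAddCommGroup H] [InnerProductSpace 𝕜 H]
    {F : ι → X → Submodule 𝕜 H} [∀ i x, (F i x).HasOrthogonalProjection] {v : ι → X → ℝ}
    (hInt : ∀ i h, Integrable (fun x => v i x ^ 2 * ‖(F i x).starProjection h‖ ^ 2) μ)
    {B : ι → ℝ}
    (hBessel : ∀ i h, ∫ x, v i x ^ 2 * ‖(F i x).starProjection h‖ ^ 2 ∂μ ≤ B i * ‖h‖ ^ 2)
    {Y : Set X} (hY : MeasurableSet Y) {A : ℝ}
    (hlower : ∀ τ : ι → Set X, IsMeasurablePartition τ Y → ∀ h,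
      A * ‖h‖ ^ 2 ≤ ∑ i, ∫ x in τ i, v i x ^ 2 * ‖(F i x).starProjection h‖ ^ 2 ∂μ)
    {σ : ι → Set X} (hσ : IsMeasurablePartition σ Set.univ) (h : H) :
    A * ‖h‖ ^ 2 ≤ ∑ i, ∫ x in σ i, v i x ^ 2 * ‖(F i x).starProjection h‖ ^ 2 ∂μ ∧
      ∑ i, ∫ x in σ i, v i x ^ 2 * ‖(F i x).starProjection h‖ ^ 2 ∂μ ≤
        (∑ i, B i) * ‖h‖ ^ 2 := by
  have density_nonneg (i : ι) (x : X) : 0 ≤ v i x ^ 2 * ‖(F i x).starProjection h‖ ^ 2 := by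
    positivity
  constructor
  · exact hσ.le_sum_setIntegral_of_subset hY (Set.subset_univ Y)
      (fun i => (hInt i h).integrableOn) (fun i => .of_forall (density_nonneg i))
      (fun τ hτ => hlower τ hτ h)
  · calc
      ∑ i, ∫ x in σ i, v i x ^ 2 * ‖(F i x).starProjection h‖ ^ 2 ∂μ
          ≤ ∑ i, ∫ x, v i x ^ 2 * ‖(F i x).starProjection h‖ ^ 2 ∂μ :=
        sum_setIntegral_le_sum_integral (hInt · h) fun i => .of_forall (density_nonneg i)
      _ ≤ ∑ i, B i * ‖h‖ ^ 2 := Finset.sum_le_sum fun i _ => hBessel i h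
      _ = (∑ i, B i) * ‖h‖ ^ 2 := (Finset.sum_mul ..).symm

/-- If each `(F i, v i)` is a c-fusion frame for `H` with bounds `A i, B i`
and the family restricted to a measurable subset `Y ⊆ X` is c-fusion woven with universal
bounds `A, B`, then the full family is c-fusion woven for `H` with universal bounds
`A` and `∑ i, B i`. -/
theorem cFusionWoven_of_woven_on_subset
    {X : Type*} [MeasurableSpace X] (μ : Measure X)
    {H : Type*} [NormedAddCommGroup H] [InnerProductSpace ℂ H] [CompleteSpace H]
    (m : ℕ) (F : Fin m → X → Submodule ℂ H) (hF : ∀ i x, IsClosed ((F i x : Set H)))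
    (v : Fin m → X → ℝ) (hv_pos : ∀ i x, 0 < v i x) (hv_meas : ∀ i, Measurable (v i))
    (hFmeas : ∀ (i : Fin m) (h : H),
      AEStronglyMeasurable (fun x => cProj (F i x) (hF i x) h) μ)
    (hInt : ∀ (i : Fin m) (h : H),
      Integrable (fun x => (v i x) ^ 2 * ‖cProj (F i x) (hF i x) h‖ ^ 2) μ)
    (A B : Fin m → ℝ) (hA_pos : ∀ i, 0 < A i) (hAB : ∀ i, A i ≤ B i)
    (hframe : ∀ (i : Fin m) (h : H),
      A i * ‖h‖ ^ 2 ≤ ∫ x, (v i x) ^ 2 * ‖cProj (F i x) (hF i x) h‖ ^ 2 ∂μ ∧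
      ∫ x, (v i x) ^ 2 * ‖cProj (F i x) (hF i x) h‖ ^ 2 ∂μ ≤ B i * ‖h‖ ^ 2)
    (Y : Set X) (hY : MeasurableSet Y)
    (A' B' : ℝ) (hA' : 0 < A') (hA'B' : A' ≤ B')
    (hwovenY : ∀ (σ : Fin m → Set X), (∀ i, MeasurableSet (σ i)) →
      Pairwise (Function.onFun Disjoint σ) → (⋃ i, σ i) = Y →
      ∀ h : H,
        A' * ‖h‖ ^ 2 ≤ ∑ i, ∫ x in σ i, (v i x) ^ 2 * ‖cProj (F i x) (hF i x) h‖ ^ 2 ∂μ ∧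
        ∑ i, ∫ x in σ i, (v i x) ^ 2 * ‖cProj (F i x) (hF i x) h‖ ^ 2 ∂μ ≤ B' * ‖h‖ ^ 2) :
    ∀ (σ : Fin m → Set X), (∀ i, MeasurableSet (σ i)) →
      Pairwise (Function.onFun Disjoint σ) → (⋃ i, σ i) = Set.univ →
      ∀ h : H,
        A' * ‖h‖ ^ 2 ≤ ∑ i, ∫ x in σ i, (v i x) ^ 2 * ‖cProj (F i x) (hF i x) h‖ ^ 2 ∂μ ∧
        ∑ i, ∫ x in σ i, (v i x) ^ 2 * ‖cProj (F i x) (hF i x) h‖ ^ 2 ∂μ ≤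
          (∑ i, B i) * ‖h‖ ^ 2 := by
  have (i : Fin m) (x : X) : CompleteSpace (F i x) := (hF i x).completeSpace_coe
  exact fun σ hσ_meas hσ_disj hσ_univ => cFusionWoven_of_woven_on_subset_general hInt
    (fun i h => (hframe i h).2) hY
    (fun τ hτ h => (hwovenY τ hτ.measurableSet hτ.pairwise_disjoint hτ.iUnion_eq h).1)
    ⟨hσ_meas, hσ_disj, hσ_univ⟩
end

section
/- Let μ be σ-finite, and let (F,v) and (G,w) be c-fusion frames for H with optimal (i.e. smallest possible) upper frame bounds B₁ and B₂ respectively, meaning B₁ = sup_{‖h‖=1} ∫_X v(x)²‖π_{F(x)}h‖² dμ(x) and B₂ = sup_{‖h‖=1} ∫_X w(x)²‖π_{G(x)}h‖² dμ(x). Suppose (F,v) and (G,w) are c-fusion woven for H. Then B₁ + B₂ is not the optimal universal upper frame bound for the weavings: sup over measurable σ ⊆ X and h ∈ H with ‖h‖ = 1 of ∫_σ v(x)²‖π_{F(x)}h‖² dμ(x) + ∫_{X∖σ} w(x)²‖π_{G(x)}h‖² dμ(x) is strictly less than B₁ + B₂. -/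
open MeasureTheory

/-!
The weavings over `σ` and over `σᶜ` together use each of the two families once over all of `X`, so
their values at a unit vector sum to at most `B₁ + B₂`. The universal lower bound `A`, applied to
the weaving over `σᶜ`, therefore leaves at most `B₁ + B₂ - A` for the weaving over `σ`.
-/

section Weaving

variable {X : Type*} [MeasurableSpace X] {μ : Measure X}

/-- The integral over `X` of the weaving that follows `f` on `σ` and `g` on `σᶜ`. For
`f x = v x ^ 2 * ‖π_{F x} h‖ ^ 2` and `g x = w x ^ 2 * ‖π_{G x} h‖ ^ 2` it is the frame sum at `h`
of the weaving of `(F, v)` and `(G, w)` determined by `σ`. -/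
noncomputable def weavingIntegral {E : Type*} [NormedAddCommGroup E] [NormedSpace ℝ E]
    (μ : Measure X) (f g : X → E) (σ : Set X) : E :=
  (∫ x in σ, f x ∂μ) + ∫ x in σᶜ, g x ∂μ

theorem weavingIntegral_add_weavingIntegral_compl {E : Type*} [NormedAddCommGroup E]
    [NormedSpace ℝ E] {f g : X → E} (hf : Integrable f μ) (hg : Integrable g μ) {σ : Set X}
    (hσ : MeasurableSet σ) :
    weavingIntegral μ f g σ + weavingIntegral μ f g σᶜ = (∫ x, f x ∂μ) + ∫ x, g x ∂μ := by
  rw [weavingIntegral, weavingIntegral, compl_compl, ← integral_add_compl hσ hf,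
    ← integral_add_compl hσ hg]
  abel

theorem weavingIntegral_le_of_le_weavingIntegral_compl {f g : X → ℝ} (hf : Integrable f μ)
    (hg : Integrable g μ) {σ : Set X} (hσ : MeasurableSet σ) {A B₁ B₂ : ℝ}
    (hB₁ : ∫ x, f x ∂μ ≤ B₁) (hB₂ : ∫ x, g x ∂μ ≤ B₂) (hA : A ≤ weavingIntegral μ f g σᶜ) :
    weavingIntegral μ f g σ ≤ B₁ + B₂ - A := by
  have hsum := weavingIntegral_add_weavingIntegral_compl hf hg hσ
  linarith

theorem optimal_upper_bound_of_weaving_lt_general {ι : Type*} {S : Set ι} (hS : S.Nonempty)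
    {f g : ι → X → ℝ} (hf : ∀ i ∈ S, Integrable (f i) μ) (hg : ∀ i ∈ S, Integrable (g i) μ)
    {A B₁ B₂ : ℝ} (hB₁ : ∀ i ∈ S, ∫ x, f i x ∂μ ≤ B₁) (hB₂ : ∀ i ∈ S, ∫ x, g i x ∂μ ≤ B₂)
    (hA : ∀ σ : Set X, MeasurableSet σ → ∀ i ∈ S, A ≤ weavingIntegral μ (f i) (g i) σ) :
    sSup {r : ℝ | ∃ σ : Set X, MeasurableSet σ ∧ ∃ i ∈ S, r = weavingIntegral μ (f i) (g i) σ} ≤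
      B₁ + B₂ - A := by
  obtain ⟨i₀, hi₀⟩ := hS
  refine csSup_le ⟨_, ∅, MeasurableSet.empty, i₀, hi₀, rfl⟩ ?_
  rintro _ ⟨σ, hσ, i, hi, rfl⟩
  exact weavingIntegral_le_of_le_weavingIntegral_compl (hf i hi) (hg i hi) hσ (hB₁ i hi)
    (hB₂ i hi) (hA σᶜ hσ.compl i hi)

end Weaving

/-- Let `μ` be σ-finite and let `(F, v)` and `(G, w)` be c-fusion frames
for `H` with optimal upper frame bounds `B₁` and `B₂`, respectively. If they are c-fusion
woven, then `B₁ + B₂` is not the optimal universal upper frame bound of the weavings: the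
supremum of the weaving sums over unit vectors is strictly less than `B₁ + B₂`. -/
theorem optimal_upper_bound_of_weaving_lt
    {X : Type*} [MeasurableSpace X] (μ : Measure X) [SigmaFinite μ]
    {H : Type*} [NormedAddCommGroup H] [InnerProductSpace ℂ H] [CompleteSpace H]
    [Nontrivial H]
    (F G : X → Submodule ℂ H) (hF : ∀ x, IsClosed ((F x : Set H)))
    (hG : ∀ x, IsClosed ((G x : Set H)))
    (v w : X → ℝ) (hv_pos : ∀ x, 0 < v x) (hw_pos : ∀ x, 0 < w x)
    (hv_meas : Measurable v) (hw_meas : Measurable w)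
    (hFmeas : ∀ h : H, AEStronglyMeasurable (fun x => cProj (F x) (hF x) h) μ)
    (hGmeas : ∀ h : H, AEStronglyMeasurable (fun x => cProj (G x) (hG x) h) μ)
    (hIntF : ∀ h : H, Integrable (fun x => (v x) ^ 2 * ‖cProj (F x) (hF x) h‖ ^ 2) μ)
    (hIntG : ∀ h : H, Integrable (fun x => (w x) ^ 2 * ‖cProj (G x) (hG x) h‖ ^ 2) μ)
    -- `(F, v)` and `(G, w)` are c-fusion frames:
    (A₁ A₂ B₁ B₂ : ℝ) (hA₁ : 0 < A₁) (hA₂ : 0 < A₂)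
    (hF_frame : ∀ h : H,
      A₁ * ‖h‖ ^ 2 ≤ ∫ x, (v x) ^ 2 * ‖cProj (F x) (hF x) h‖ ^ 2 ∂μ ∧
      ∫ x, (v x) ^ 2 * ‖cProj (F x) (hF x) h‖ ^ 2 ∂μ ≤ B₁ * ‖h‖ ^ 2)
    (hG_frame : ∀ h : H,
      A₂ * ‖h‖ ^ 2 ≤ ∫ x, (w x) ^ 2 * ‖cProj (G x) (hG x) h‖ ^ 2 ∂μ ∧
      ∫ x, (w x) ^ 2 * ‖cProj (G x) (hG x) h‖ ^ 2 ∂μ ≤ B₂ * ‖h‖ ^ 2)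
    -- `B₁` and `B₂` are the *optimal* upper frame bounds:
    (hB₁_opt : IsLUB {r : ℝ | ∃ h : H, ‖h‖ = 1 ∧
      r = ∫ x, (v x) ^ 2 * ‖cProj (F x) (hF x) h‖ ^ 2 ∂μ} B₁)
    (hB₂_opt : IsLUB {r : ℝ | ∃ h : H, ‖h‖ = 1 ∧
      r = ∫ x, (w x) ^ 2 * ‖cProj (G x) (hG x) h‖ ^ 2 ∂μ} B₂)
    -- `(F, v)` and `(G, w)` are c-fusion woven with universal bounds `A ≤ B`:
    (A B : ℝ) (hA : 0 < A) (hAB : A ≤ B)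
    (hwoven : ∀ σ : Set X, MeasurableSet σ → ∀ h : H,
      A * ‖h‖ ^ 2 ≤ (∫ x in σ, (v x) ^ 2 * ‖cProj (F x) (hF x) h‖ ^ 2 ∂μ) +
          (∫ x in σᶜ, (w x) ^ 2 * ‖cProj (G x) (hG x) h‖ ^ 2 ∂μ) ∧
      (∫ x in σ, (v x) ^ 2 * ‖cProj (F x) (hF x) h‖ ^ 2 ∂μ) +
          (∫ x in σᶜ, (w x) ^ 2 * ‖cProj (G x) (hG x) h‖ ^ 2 ∂μ) ≤ B * ‖h‖ ^ 2) :
    sSup {r : ℝ | ∃ σ : Set X, MeasurableSet σ ∧ ∃ h : H, ‖h‖ = 1 ∧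
        r = (∫ x in σ, (v x) ^ 2 * ‖cProj (F x) (hF x) h‖ ^ 2 ∂μ) +
          (∫ x in σᶜ, (w x) ^ 2 * ‖cProj (G x) (hG x) h‖ ^ 2 ∂μ)} < B₁ + B₂ := by
  refine (optimal_upper_bound_of_weaving_lt_general (S := {h : H | ‖h‖ = 1})
    (exists_norm_eq H zero_le_one) (fun h _ => hIntF h) (fun h _ => hIntG h)
    (fun h hh => hB₁_opt.1 ⟨h, hh, rfl⟩) (fun h hh => hB₂_opt.1 ⟨h, hh, rfl⟩)
    fun σ hσ h (hh : ‖h‖ = 1) => ?_).trans_lt (sub_lt_self _ hA)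
  simpa only [weavingIntegral, hh, one_pow, mul_one] using (hwoven σ hσ h).1
end
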